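/- Let a₋ > 0 and a₊ > 0, and let d, s be real numbers. Let Θ₁ and Θ₃ each be either the function h or the identity function on ℝ. Then there exists a unique pair of real numbers (ε₁, ε₃) such that ε₃ − ε₁ = d and a₋·Θ₁(ε₁) + a₊·Θ₃(ε₃) = s. -/

import Mathlib

/-- The function `h` from the paper: `h(ε) = ε` if `ε ≥ 0`, `h(ε) = sinh ε` if `ε < 0`. -/
noncomputable def hfun (ε : ℝ) : ℝ := if 0 ≤ ε then ε else Real.sinh ε

/-!
Substituting `ε₃ = ε₁ + d` leaves one equation in `ε₁`, whose left-hand side is the sum of a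
strictly increasing bijection of `ℝ` and a continuous nondecreasing function. Such a sum is a
bijection: it is strictly increasing, and the intermediate value theorem makes it surjective.
-/

open Function

section Sum

variable {α β : Type*} [LinearOrder α] [TopologicalSpace α] [PreconnectedSpace α]
  [AddCommGroup β] [LinearOrder β] [IsOrderedAddMonoid β] [TopologicalSpace β]
  [OrderClosedTopology β] [ContinuousAdd β] {f g : α → β}

theorem surjective_add_of_monotone (hf : Monotone f) (hf_cont : Continuous f)
    (hf_surj : Surjective f) (hg : Monotone g) (hg_cont : Continuous g) :
    Surjective fun x ↦ f x + g x := by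
  intro c
  obtain ⟨p, -⟩ := hf_surj c
  obtain ⟨q, hq⟩ := hf_surj (c - g p)
  have hc : f q + g p = c := by rw [hq, sub_add_cancel]
  -- Comparing the sum at `p` and at `q` with `f q + g p` puts `c` between its two values.
  have h_cont : Continuous fun x ↦ f x + g x := hf_cont.add hg_cont
  rcases le_total q p with hqp | hpq
  · exact mem_range_of_exists_le_of_exists_ge h_cont
      ⟨q, hc ▸ add_le_add_right (hg hqp) (f q)⟩ ⟨p, hc ▸ add_le_add_left (hf hqp) (g p)⟩
  · exact mem_range_of_exists_le_of_exists_ge h_cont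
      ⟨p, hc ▸ add_le_add_left (hf hpq) (g p)⟩ ⟨q, hc ▸ add_le_add_right (hg hpq) (f q)⟩

theorem bijective_add_of_strictMono_of_monotone (hf : StrictMono f) (hf_cont : Continuous f)
    (hf_surj : Surjective f) (hg : Monotone g) (hg_cont : Continuous g) :
    Bijective fun x ↦ f x + g x :=
  ⟨(hf.add_monotone hg).injective,
    surjective_add_of_monotone hf.monotone hf_cont hf_surj hg hg_cont⟩

end Sum

theorem strictMono_hfun : StrictMono hfun := by
  intro x y hxy
  unfold hfun
  split_ifs with hx hy hy
  · exact hxy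
  · exact absurd (hx.trans hxy.le) hy
  · exact (Real.sinh_neg_iff.2 (not_le.1 hx)).trans_le hy
  · exact Real.sinh_lt_sinh.2 hxy

theorem surjective_hfun : Surjective hfun := by
  intro y
  rcases le_or_gt 0 y with hy | hy
  · exact ⟨y, if_pos hy⟩
  · have h_neg : ¬ 0 ≤ Real.arsinh y := not_le.2 (Real.arsinh_neg_iff.2 hy)
    exact ⟨Real.arsinh y, (if_neg h_neg).trans (Real.sinh_arsinh y)⟩

theorem strictMono_and_surjective_of_eq_hfun_or_eq_id {Θ : ℝ → ℝ} (hΘ : Θ = hfun ∨ Θ = id) :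
    StrictMono Θ ∧ Surjective Θ := by
  rcases hΘ with rfl | rfl
  · exact ⟨strictMono_hfun, surjective_hfun⟩
  · exact ⟨strictMono_id, surjective_id⟩

theorem stmt0_general {am ap : ℝ} (d s : ℝ) (ham : 0 < am) (hap : 0 ≤ ap) {Θ₁ Θ₃ : ℝ → ℝ}
    (hΘ₁ : StrictMono Θ₁) (hΘ₁_surj : Surjective Θ₁)
    (hΘ₃ : Monotone Θ₃) (hΘ₃_cont : Continuous Θ₃) :
    ∃! ε : ℝ × ℝ, ε.2 - ε.1 = d ∧ am * Θ₁ ε.1 + ap * Θ₃ ε.2 = s := by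
  have hΘ₁_cont : Continuous Θ₁ := hΘ₁.monotone.continuous_of_surjective hΘ₁_surj
  have h_mono : Monotone fun x ↦ ap * Θ₃ (x + d) :=
    (hΘ₃.comp (monotone_id.add_const d)).const_mul hap
  have h_bij : Bijective fun x ↦ am * Θ₁ x + ap * Θ₃ (x + d) :=
    bijective_add_of_strictMono_of_monotone (hΘ₁.const_mul ham) (by fun_prop)
      ((mul_left_surjective₀ ham.ne').comp hΘ₁_surj) h_mono (by fun_prop)
  obtain ⟨x, hx, hx_unique⟩ := h_bij.existsUnique s
  refine ⟨(x, x + d), ⟨add_sub_cancel_left x d, hx⟩, ?_⟩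
  rintro ⟨y, z⟩ ⟨hyz, hy⟩
  obtain rfl : z = y + d := sub_eq_iff_eq_add'.1 hyz
  rw [hx_unique y hy]

/-- Existence and uniqueness underlying the four Pre-Riemann solvers. -/
theorem stmt0 (am ap d s : ℝ) (ham : 0 < am) (hap : 0 < ap)
    (Θ₁ Θ₃ : ℝ → ℝ)
    (hΘ₁ : Θ₁ = hfun ∨ Θ₁ = id) (hΘ₃ : Θ₃ = hfun ∨ Θ₃ = id) :
    ∃! ε : ℝ × ℝ, ε.2 - ε.1 = d ∧ am * Θ₁ ε.1 + ap * Θ₃ ε.2 = s := by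
  obtain ⟨h₁, h₁_surj⟩ := strictMono_and_surjective_of_eq_hfun_or_eq_id hΘ₁
  obtain ⟨h₃, h₃_surj⟩ := strictMono_and_surjective_of_eq_hfun_or_eq_id hΘ₃
  exact stmt0_general d s ham hap.le h₁ h₁_surj h₃.monotone
    (h₃.monotone.continuous_of_surjective h₃_surj)
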